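/- Let (p_k)_{k≥1} be strictly positive reals with ∑_k p_k = 1 and counting function ρ*(x) = #{k : p_k ≥ x} satisfying ρ*(x) ∼ x^{−α} ℓ(1/x) as x ↓ 0 for some α ∈ (0,1] and some ℓ slowly varying at infinity. Let q : (0,∞) → ℕ be a function of class 𝒬. Then, as t → ∞, ∑_{k≥1} ∑_{j=q(t)}^{∞} e^{−p_k t} (p_k t)^j / j! ∼ (t/q(t))^α ℓ(t/q(t)). -/

import Mathlib

open MeasureTheory Set Filter Real

/-!
With `x = q(t) / t`, the probability `P{Poi(p t) ≥ q(t)}` depends only on `q(t)` and `p / x`. As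
`q(t) → ∞`, Chernoff's bound makes it close to `1` for `p / x > 1`, and exponentially small in
`q(t)`, even relative to any fixed power of `p / x`, for `p / x < 1`. So the sum should be close to
`ρ*(x)`; what has to be controlled is the contribution of the infinitely many small `p_k`. Regular
variation gives `ρ*(x / 2) ≤ 2 ^ r * ρ*(x)` for some `r` and all small `x`. Summing over dyadic
shells, `∑ p_k ^ (r + 1)` over `p_k < x` is at most `(2 x) ^ (r + 1) * ρ*(x)`, which the exponential
smallness of the Poisson tail beats. Hence, up to a factor close to `1`, the sum is at most
`ρ*(c x)` for `c < 1` and at least `ρ*(c x)` for `c > 1`, while `ρ*(c x) / ρ*(x)` tends to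
`c ^ (-α)`; now let `c → 1`.
-/

open scoped Topology

section RegularVariation

/-- Regular variation of index `a` at `0` from the right. The case `c = 1` forces `f` to be nonzero
near `0`, because `0 / 0 = 0`. -/
def RegularlyVaryingAtZero (f : ℝ → ℝ) (a : ℝ) : Prop :=
  ∀ c : ℝ, 0 < c → Tendsto (fun x => f (c * x) / f x) (𝓝[>] 0) (𝓝 (c ^ a))

variable {f g ℓ : ℝ → ℝ} {a : ℝ}

lemma tendsto_const_mul_nhdsGT_zero {c : ℝ} (hc : 0 < c) :
    Tendsto (fun x => c * x) (𝓝[>] 0) (𝓝[>] 0) :=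
  tendsto_iff_comap.2 (comap_mulLeft_nhdsGT_zero hc).ge

lemma regularlyVaryingAtZero_rpow_mul_of_slowlyVarying
    (hℓ : ∀ c : ℝ, 0 < c → Tendsto (fun t => ℓ (c * t) / ℓ t) atTop (𝓝 1)) (a : ℝ) :
    RegularlyVaryingAtZero (fun x => x ^ a * ℓ (1 / x)) a := by
  intro c hc
  have hlim := ((hℓ c⁻¹ (inv_pos.2 hc)).comp tendsto_inv_nhdsGT_zero).const_mul (c ^ a)
  rw [mul_one] at hlim
  refine hlim.congr' ?_
  filter_upwards [self_mem_nhdsWithin] with x (hx : 0 < x)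
  have hxa : x ^ a ≠ 0 := (rpow_pos_of_pos hx a).ne'
  simp only [Function.comp_apply, one_div, mul_rpow hc.le hx.le, mul_inv]
  field_simp

namespace RegularlyVaryingAtZero

lemma eventually_ne_zero (hf : RegularlyVaryingAtZero f a) : ∀ᶠ x in 𝓝[>] 0, f x ≠ 0 := by
  have hone := hf 1 one_pos
  simp only [one_mul, one_rpow] at hone
  filter_upwards [hone.eventually_ne one_ne_zero] with x hx hfx
  simp [hfx] at hx

lemma of_tendsto_div (hg : RegularlyVaryingAtZero g a)
    (hfg : Tendsto (fun x => f x / g x) (𝓝[>] 0) (𝓝 1)) : RegularlyVaryingAtZero f a := by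
  intro c hc
  have hscale := tendsto_const_mul_nhdsGT_zero hc
  have hlim := ((hfg.comp hscale).mul (hg c hc)).div hfg one_ne_zero
  simp only [one_mul, div_one] at hlim
  refine hlim.congr' ?_
  filter_upwards [hg.eventually_ne_zero, hscale.eventually hg.eventually_ne_zero] with x hx hcx
  simp only [Function.comp_apply, Pi.div_apply]
  field_simp

lemma exists_half_le (hf : RegularlyVaryingAtZero f a) (hf0 : ∀ x, 0 ≤ f x) :
    ∃ r : ℕ, ∃ x₀ > 0, ∀ x ∈ Ioc 0 x₀, f (x / 2) ≤ 2 ^ r * f x := by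
  obtain ⟨r, hr⟩ := pow_unbounded_of_one_lt ((1 / 2 : ℝ) ^ a) one_lt_two
  have hev : ∀ᶠ x in 𝓝[>] 0, f (x / 2) ≤ 2 ^ r * f x := by
    filter_upwards [(hf (1 / 2) one_half_pos).eventually_lt_const hr, hf.eventually_ne_zero]
      with x hlt hne
    rw [div_lt_iff₀ ((hf0 x).lt_of_ne' hne), one_div_mul_eq_div] at hlt
    exact hlt.le
  obtain ⟨x₀, hx₀, hsub⟩ := mem_nhdsGT_iff_exists_Ioc_subset.1 hev
  exact ⟨r, x₀, hx₀, hsub⟩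

/-- The factor `2 - c` may be replaced by any function of `c` that tends to `1` as `c → 1`. -/
lemma tendsto_div_of_dilation_bounds {β : Type*} {l : Filter β} {x S : β → ℝ}
    (hf : RegularlyVaryingAtZero f a) (hf0 : ∀ x, 0 ≤ f x) (hx : Tendsto x l (𝓝[>] 0))
    (hupper : ∀ c ∈ Ioo 0 1, ∀ᶠ b in l, S b ≤ (2 - c) * f (c * x b))
    (hlower : ∀ c > 1, ∀ᶠ b in l, (2 - c) * f (c * x b) ≤ S b) :
    Tendsto (fun b => S b / f (x b)) l (𝓝 1) := by
  have hdilate (c : ℝ) (hc : 0 < c) :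
      Tendsto (fun b => (2 - c) * f (c * x b) / f (x b)) l (𝓝 ((2 - c) * c ^ a)) := by
    simpa only [mul_div_assoc, Function.comp_def] using ((hf c hc).comp hx).const_mul (2 - c)
  have hcont : Tendsto (fun c : ℝ => (2 - c) * c ^ a) (𝓝 1) (𝓝 1) := by
    have hat : ContinuousAt (fun c : ℝ => (2 - c) * c ^ a) 1 :=
      (continuousAt_const.sub continuousAt_id).mul
        (continuousAt_rpow_const 1 a (Or.inl one_ne_zero))
    convert hat.tendsto using 2
    norm_num
  refine tendsto_order.2 ⟨fun y hy => ?_, fun y hy => ?_⟩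
  · obtain ⟨c, hyc, hc⟩ := (((hcont.mono_left nhdsWithin_le_nhds).eventually_const_lt hy).and
      (self_mem_nhdsWithin : Ioi 1 ∈ 𝓝[>] (1 : ℝ))).exists
    filter_upwards [hlower c hc, (hdilate c (one_pos.trans hc)).eventually_const_lt hyc]
      with b hb hlt
    exact hlt.trans_le (div_le_div_of_nonneg_right hb (hf0 _))
  · obtain ⟨c, hyc, hc⟩ := (((hcont.mono_left nhdsWithin_le_nhds).eventually_lt_const hy).and
      (Ioo_mem_nhdsLT one_pos : Ioo 0 1 ∈ 𝓝[<] (1 : ℝ))).exists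
    filter_upwards [hupper c hc, (hdilate c hc.1).eventually_lt_const hyc] with b hb hlt
    exact (div_le_div_of_nonneg_right hb (hf0 _)).trans_lt hlt

end RegularlyVaryingAtZero

end RegularVariation

section Counting

variable {ι : Type*} {p : ι → ℝ}

/-- The counting function `ρ*(x) = #{k : p k ≥ x}` of a family of reals, with the value `0` when
this set is infinite. -/
noncomputable def countGE (p : ι → ℝ) (x : ℝ) : ℝ := Nat.card {k | x ≤ p k}

lemma countGE_nonneg (p : ι → ℝ) (x : ℝ) : 0 ≤ countGE p x := Nat.cast_nonneg _

lemma countGE_eq_card_toFinset {x : ℝ} (hfin : {k | x ≤ p k}.Finite) :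
    countGE p x = hfin.toFinset.card := by
  rw [countGE, Nat.card_coe_set_eq, ncard_eq_toFinset_card _ hfin]

lemma card_filter_le_countGE {x : ℝ} (hfin : {k | x ≤ p k}.Finite) (s : Finset ι) :
    ((s.filter fun k => x ≤ p k).card : ℝ) ≤ countGE p x := by
  rw [countGE_eq_card_toFinset hfin]
  exact_mod_cast Finset.card_le_card fun k hk => by simpa using (Finset.mem_filter.1 hk).2

lemma finite_setOf_le_of_countGE_ne_zero (h : ∀ᶠ x in 𝓝[>] 0, countGE p x ≠ 0) {x : ℝ}
    (hx : 0 < x) : {k | x ≤ p k}.Finite := by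
  obtain ⟨y, hy, hyx⟩ := (h.and (Ioo_mem_nhdsGT hx)).exists
  have hfin : {k | y ≤ p k}.Finite := finite_of_ncard_ne_zero (Nat.cast_ne_zero.1 hy)
  exact hfin.subset fun k (hk : x ≤ p k) => hyx.2.le.trans hk

section Doubling

variable {r : ℕ} {x x₀ : ℝ}

lemma sum_filter_lt_pow_le_half_add (hp : ∀ k, 0 ≤ p k) (hfin : {k | x / 2 ≤ p k}.Finite)
    (hx : 0 ≤ x) (n : ℕ) (s : Finset ι) :
    ∑ k ∈ s with p k < x, p k ^ n ≤
      ∑ k ∈ s with p k < x / 2, p k ^ n + x ^ n * countGE p (x / 2) := by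
  have hshell : ∑ k ∈ s with x / 2 ≤ p k, x ^ n ≤ x ^ n * countGE p (x / 2) := by
    rw [Finset.sum_const, nsmul_eq_mul, mul_comm]
    exact mul_le_mul_of_nonneg_left (card_filter_le_countGE hfin s) (pow_nonneg hx n)
  refine le_trans ?_ (add_le_add_right hshell _)
  simp only [Finset.sum_filter, ← Finset.sum_add_distrib]
  refine Finset.sum_le_sum fun k _ => ?_
  have hk : 0 ≤ p k ^ n := pow_nonneg (hp k) n
  have hxn : 0 ≤ x ^ n := pow_nonneg hx n
  have hkx (h : p k < x) : p k ^ n ≤ x ^ n := pow_le_pow_left₀ (hp k) h.le n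
  grind

lemma sum_filter_lt_pow_le_add_card_mul (hp : ∀ k, 0 ≤ p k)
    (hfin : ∀ x > 0, {k | x ≤ p k}.Finite)
    (hhalf : ∀ x ∈ Ioc 0 x₀, countGE p (x / 2) ≤ 2 ^ r * countGE p x) (s : Finset ι) (n : ℕ)
    (hx : x ∈ Ioc 0 x₀) :
    ∑ k ∈ s with p k < x, p k ^ (r + 1) ≤
      (2 * x) ^ (r + 1) * countGE p x + s.card * (x / 2 ^ n) ^ (r + 1) := by
  induction n generalizing x with
  | zero =>
    have hle : ∑ k ∈ s with p k < x, p k ^ (r + 1) ≤ s.card * x ^ (r + 1) := by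
      rw [← nsmul_eq_mul, ← Finset.sum_const]
      refine (Finset.sum_le_sum fun k hk => pow_le_pow_left₀ (hp k)
        (Finset.mem_filter.1 hk).2.le _).trans ?_
      exact Finset.sum_le_sum_of_subset_of_nonneg (Finset.filter_subset _ _)
        fun _ _ _ => pow_nonneg hx.1.le _
    have hnonneg : 0 ≤ (2 * x) ^ (r + 1) * countGE p x :=
      mul_nonneg (pow_nonneg (by linarith [hx.1]) _) (countGE_nonneg p x)
    simpa using hle.trans (le_add_of_nonneg_left hnonneg)
  | succ n ih =>
    have hx2 : x / 2 ∈ Ioc 0 x₀ := ⟨half_pos hx.1, (half_le_self hx.1.le).trans hx.2⟩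
    have hx0 : 0 ≤ x ^ (r + 1) := pow_nonneg hx.1.le _
    calc ∑ k ∈ s with p k < x, p k ^ (r + 1)
        ≤ ∑ k ∈ s with p k < x / 2, p k ^ (r + 1) + x ^ (r + 1) * countGE p (x / 2) :=
          sum_filter_lt_pow_le_half_add hp (hfin _ hx2.1) hx.1.le _ s
      _ ≤ (2 * (x / 2)) ^ (r + 1) * countGE p (x / 2) + s.card * (x / 2 / 2 ^ n) ^ (r + 1)
            + x ^ (r + 1) * countGE p (x / 2) := by gcongr; exact ih hx2
      _ = 2 * x ^ (r + 1) * countGE p (x / 2) + s.card * (x / 2 ^ (n + 1)) ^ (r + 1) := by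
          rw [mul_div_cancel₀ x two_ne_zero, div_div, ← pow_succ']
          ring
      _ ≤ 2 * x ^ (r + 1) * (2 ^ r * countGE p x) + s.card * (x / 2 ^ (n + 1)) ^ (r + 1) := by
          gcongr
          exact hhalf x hx
      _ = (2 * x) ^ (r + 1) * countGE p x + s.card * (x / 2 ^ (n + 1)) ^ (r + 1) := by ring

lemma sum_filter_lt_pow_le (hp : ∀ k, 0 ≤ p k) (hfin : ∀ x > 0, {k | x ≤ p k}.Finite)
    (hhalf : ∀ x ∈ Ioc 0 x₀, countGE p (x / 2) ≤ 2 ^ r * countGE p x) (s : Finset ι)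
    (hx : x ∈ Ioc 0 x₀) :
    ∑ k ∈ s with p k < x, p k ^ (r + 1) ≤ (2 * x) ^ (r + 1) * countGE p x := by
  have hdyadic : Tendsto (fun n : ℕ => x / 2 ^ n) atTop (𝓝 0) :=
    tendsto_const_nhds.div_atTop (tendsto_pow_atTop_atTop_of_one_lt one_lt_two)
  have hlim := ((hdyadic.pow (r + 1)).const_mul (s.card : ℝ)).const_add
    ((2 * x) ^ (r + 1) * countGE p x)
  rw [zero_pow r.succ_ne_zero, mul_zero, add_zero] at hlim
  exact ge_of_tendsto' hlim fun n => sum_filter_lt_pow_le_add_card_mul hp hfin hhalf s n hx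

lemma sum_kernel_le {f : ℝ → ℝ} {c ε : ℝ} (hp : ∀ k, 0 ≤ p k)
    (hfin : ∀ x > 0, {k | x ≤ p k}.Finite)
    (hhalf : ∀ x ∈ Ioc 0 x₀, countGE p (x / 2) ≤ 2 ^ r * countGE p x)
    (hf1 : ∀ u ≥ 0, f u ≤ 1) (hfε : ∀ u ∈ Icc 0 c, f u ≤ ε * u ^ (r + 1)) (hε : 0 ≤ ε)
    (hc : 0 < c) (hx : 0 < x) (hcx : c * x ≤ x₀) (s : Finset ι) :
    ∑ k ∈ s, f (p k / x) ≤ (1 + ε * (2 * c) ^ (r + 1)) * countGE p (c * x) := by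
  have hcx0 : 0 < c * x := mul_pos hc hx
  have hlarge : ∑ k ∈ s with ¬ p k < c * x, f (p k / x) ≤ countGE p (c * x) := by
    refine le_trans ?_ (card_filter_le_countGE (hfin _ hcx0) s)
    simp only [not_lt]
    rw [← nsmul_one, ← Finset.sum_const]
    exact Finset.sum_le_sum fun k _ => hf1 _ (div_nonneg (hp k) hx.le)
  have hsmall : ∑ k ∈ s with p k < c * x, f (p k / x) ≤
      ε * (2 * c) ^ (r + 1) * countGE p (c * x) :=
    calc ∑ k ∈ s with p k < c * x, f (p k / x)
        ≤ ∑ k ∈ s with p k < c * x, ε * (p k / x) ^ (r + 1) :=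
          Finset.sum_le_sum fun k hk => hfε _
            ⟨div_nonneg (hp k) hx.le, (div_le_iff₀ hx).2 (Finset.mem_filter.1 hk).2.le⟩
      _ = ε / x ^ (r + 1) * ∑ k ∈ s with p k < c * x, p k ^ (r + 1) := by
          rw [Finset.mul_sum]
          refine Finset.sum_congr rfl fun k _ => ?_
          rw [div_pow]
          ring
      _ ≤ ε / x ^ (r + 1) * ((2 * (c * x)) ^ (r + 1) * countGE p (c * x)) := by
          gcongr
          exact sum_filter_lt_pow_le hp hfin hhalf s ⟨hcx0, hcx⟩
      _ = ε * (2 * c) ^ (r + 1) * countGE p (c * x) := by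
          rw [← mul_assoc 2, mul_pow (2 * c)]
          field_simp
  rw [← Finset.sum_filter_add_sum_filter_not s (fun k => p k < c * x), add_mul, one_mul, add_comm]
  exact add_le_add hlarge hsmall

end Doubling

lemma mul_countGE_le_tsum_kernel {f : ℝ → ℝ} {c x a : ℝ} (hfin : {k | c * x ≤ p k}.Finite)
    (hsum : Summable fun k => f (p k / x)) (hf0 : ∀ k, 0 ≤ f (p k / x)) (hx : 0 < x)
    (ha : ∀ u ≥ c, a ≤ f u) : a * countGE p (c * x) ≤ ∑' k, f (p k / x) := by
  rw [countGE_eq_card_toFinset hfin, mul_comm, ← nsmul_eq_mul, ← Finset.sum_const]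
  refine (Finset.sum_le_sum fun k hk => ?_).trans
    (hsum.sum_le_tsum hfin.toFinset fun k _ => hf0 k)
  exact ha _ ((le_div_iff₀ hx).2 (hfin.mem_toFinset.1 hk))

end Counting

section UnitStep

variable {β γ ι : Type*} {F : β → ℝ → ℝ} {l : Filter β} {p : ι → ℝ}

/-- The kernels `F b` on `[0, ∞)` converge along `l` to the indicator of `[1, ∞)`, uniformly away
from `1` and, on `[0, c]` with `c < 1`, uniformly relative to any power of the argument. -/
structure TendstoUnitStep (F : β → ℝ → ℝ) (l : Filter β) : Prop where
  nonneg : ∀ b, ∀ u ≥ 0, 0 ≤ F b u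
  le_one : ∀ b, ∀ u ≥ 0, F b u ≤ 1
  eventually_ge : ∀ c > 1, ∀ ε > 0, ∀ᶠ b in l, ∀ u ≥ c, 1 - ε ≤ F b u
  eventually_le : ∀ c ∈ Ioo 0 1, ∀ r : ℕ, ∀ ε > 0, ∀ᶠ b in l, ∀ u ∈ Icc 0 c, F b u ≤ ε * u ^ r

namespace TendstoUnitStep

lemma comp (hF : TendstoUnitStep F l) {m : γ → β} {l' : Filter γ} (hm : Tendsto m l' l) :
    TendstoUnitStep (F ∘ m) l' where
  nonneg b := hF.nonneg (m b)
  le_one b := hF.le_one (m b)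
  eventually_ge c hc ε hε := hm.eventually (hF.eventually_ge c hc ε hε)
  eventually_le c hc r ε hε := hm.eventually (hF.eventually_le c hc r ε hε)

variable {x : β → ℝ} {a : ℝ}

lemma eventually_sum_le (hF : TendstoUnitStep F l) (hp : ∀ k, 0 ≤ p k)
    (hρ : RegularlyVaryingAtZero (countGE p) a) (hx : Tendsto x l (𝓝[>] 0)) {c : ℝ}
    (hc : c ∈ Ioo 0 1) :
    ∀ᶠ b in l, ∀ s : Finset ι, ∑ k ∈ s, F b (p k / x b) ≤ (2 - c) * countGE p (c * x b) := by
  obtain ⟨r, x₀, hx₀, hhalf⟩ := hρ.exists_half_le (countGE_nonneg p)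
  have hfin (y : ℝ) (hy : y > 0) : {k | y ≤ p k}.Finite :=
    finite_setOf_le_of_countGE_ne_zero hρ.eventually_ne_zero hy
  have h2c : 0 < (2 * c) ^ (r + 1) := pow_pos (mul_pos two_pos hc.1) _
  have hε : 0 < (1 - c) / (2 * c) ^ (r + 1) := div_pos (sub_pos.2 hc.2) h2c
  filter_upwards [hF.eventually_le c hc (r + 1) _ hε, hx.eventually (Ioc_mem_nhdsGT hx₀)]
    with b hle hxb s
  have hcx : c * x b ≤ x₀ := (mul_le_of_le_one_left hxb.1.le hc.2.le).trans hxb.2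
  refine (sum_kernel_le hp hfin hhalf (hF.le_one b) hle hε.le hc.1 hxb.1 hcx s).trans_eq ?_
  rw [div_mul_cancel₀ _ h2c.ne']
  ring

theorem tendsto_tsum_div_countGE (hF : TendstoUnitStep F l) (hp : ∀ k, 0 ≤ p k)
    (hρ : RegularlyVaryingAtZero (countGE p) a) (hx : Tendsto x l (𝓝[>] 0)) :
    Tendsto (fun b => (∑' k, F b (p k / x b)) / countGE p (x b)) l (𝓝 1) := by
  have hxpos : ∀ᶠ b in l, 0 < x b := hx.eventually self_mem_nhdsWithin
  have hF0 {b : β} (hb : 0 < x b) (k : ι) : 0 ≤ F b (p k / x b) :=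
    hF.nonneg b _ (div_nonneg (hp k) hb.le)
  have hsum : ∀ᶠ b in l, Summable fun k => F b (p k / x b) := by
    filter_upwards [hF.eventually_sum_le hp hρ hx (c := 1 / 2) (by norm_num), hxpos] with b hle hb
    exact summable_of_sum_le (hF0 hb) hle
  refine hρ.tendsto_div_of_dilation_bounds (countGE_nonneg p) hx (fun c hc => ?_) fun c hc => ?_
  · filter_upwards [hF.eventually_sum_le hp hρ hx hc, hxpos] with b hle hb
    exact Real.tsum_le_of_sum_le (hF0 hb) hle
  · filter_upwards [hF.eventually_ge c hc (c - 1) (sub_pos.2 hc), hsum, hxpos] with b hge hs hb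
    have hfin := finite_setOf_le_of_countGE_ne_zero hρ.eventually_ne_zero
      (mul_pos (one_pos.trans hc) hb)
    exact mul_countGE_le_tsum_kernel hfin hs (hF0 hb) hb fun u hu => by linarith [hge u hu]

end TendstoUnitStep

end UnitStep

section PoissonTail

variable {l s u v : ℝ}

/-- The probability that a Poisson variable of mean `l ≥ 0` is at least `m`. -/
noncomputable def poissonTail (l : ℝ) (m : ℕ) : ℝ :=
  ∑' j : ℕ, exp (-l) * l ^ (j + m) / Nat.factorial (j + m)

lemma hasSum_poisson_mul_pow (l s : ℝ) :
    HasSum (fun j : ℕ => exp (-l) * l ^ j / Nat.factorial j * s ^ j) (exp (l * (s - 1))) := by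
  have hexponent : l * (s - 1) = -l + l * s := by ring
  rw [hexponent, exp_add, exp_eq_exp_ℝ]
  refine ((NormedSpace.expSeries_div_hasSum_exp (l * s)).mul_left _).congr_fun fun j => ?_
  rw [mul_pow]
  ring

lemma summable_poisson (l : ℝ) :
    Summable fun j : ℕ => exp (-l) * l ^ j / Nat.factorial j := by
  simpa using (hasSum_poisson_mul_pow l 1).summable

lemma sum_range_add_poissonTail (l : ℝ) (m : ℕ) :
    ∑ j ∈ Finset.range m, exp (-l) * l ^ j / Nat.factorial j + poissonTail l m = 1 := by
  have hone := hasSum_poisson_mul_pow l 1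
  simp only [one_pow, mul_one, sub_self, mul_zero, exp_zero] at hone
  rw [poissonTail, hone.summable.sum_add_tsum_nat_add m, hone.tsum_eq]

lemma poissonTail_nonneg (hl : 0 ≤ l) (m : ℕ) : 0 ≤ poissonTail l m :=
  tsum_nonneg fun j => by positivity

lemma poissonTail_le_one (hl : 0 ≤ l) (m : ℕ) : poissonTail l m ≤ 1 := by
  rw [← sum_range_add_poissonTail l m]
  exact le_add_of_nonneg_left (Finset.sum_nonneg fun j _ => by positivity)

lemma poissonTail_mul_pow_le (hl : 0 ≤ l) (hs : 1 ≤ s) (m : ℕ) :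
    poissonTail l m * s ^ m ≤ exp (l * (s - 1)) := by
  have hpgf := hasSum_poisson_mul_pow l s
  have hs0 : 0 ≤ s := zero_le_one.trans hs
  rw [← hpgf.tsum_eq, ← hpgf.summable.sum_add_tsum_nat_add m, poissonTail, ← tsum_mul_right]
  refine le_add_of_nonneg_of_le
    (Finset.sum_nonneg fun j _ => mul_nonneg (by positivity) (pow_nonneg hs0 j)) ?_
  refine Summable.tsum_le_tsum (fun j => ?_)
    (((summable_nat_add_iff m).2 (summable_poisson l)).mul_right _)
    ((summable_nat_add_iff m).2 hpgf.summable)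
  exact mul_le_mul_of_nonneg_left (pow_le_pow_right₀ hs (Nat.le_add_left m j)) (by positivity)

lemma one_sub_poissonTail_mul_pow_le (hl : 0 ≤ l) (hs0 : 0 ≤ s) (hs : s ≤ 1) (m : ℕ) :
    (1 - poissonTail l m) * s ^ m ≤ exp (l * (s - 1)) := by
  rw [← eq_sub_of_add_eq (sum_range_add_poissonTail l m), Finset.sum_mul]
  refine (Finset.sum_le_sum fun j hj => ?_).trans <|
    sum_le_hasSum (Finset.range m) (fun j _ => by positivity) (hasSum_poisson_mul_pow l s)
  exact mul_le_mul_of_nonneg_left (pow_le_pow_of_le_one hs0 hs (Finset.mem_range.1 hj).le)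
    (by positivity)

/-- Both Chernoff bounds at mean `u * m` are optimised at `s = u⁻¹`. -/
lemma le_mul_exp_one_sub_pow_of_mul_inv_pow_le {y : ℝ} {m : ℕ} (hu : 0 < u)
    (h : y * u⁻¹ ^ m ≤ exp (u * m * (u⁻¹ - 1))) : y ≤ (u * exp (1 - u)) ^ m := by
  have hexponent : u * m * (u⁻¹ - 1) = m * (1 - u) := by field_simp
  rwa [hexponent, inv_pow, ← div_eq_mul_inv, div_le_iff₀' (pow_pos hu m), exp_nat_mul,
    ← mul_pow] at h

lemma poissonTail_mul_le_pow (hu0 : 0 ≤ u) (hu1 : u ≤ 1) (m : ℕ) :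
    poissonTail (u * m) m ≤ (u * exp (1 - u)) ^ m := by
  obtain rfl | hu := hu0.eq_or_lt
  · obtain rfl | hm := eq_or_ne m 0
    · simpa only [pow_zero] using poissonTail_le_one (zero_mul _).ge 0
    · simp [poissonTail, hm]
  · exact le_mul_exp_one_sub_pow_of_mul_inv_pow_le hu <|
      poissonTail_mul_pow_le (mul_nonneg hu0 m.cast_nonneg) ((one_le_inv₀ hu).2 hu1) m

lemma one_sub_poissonTail_mul_le_pow (hu : 1 ≤ u) (m : ℕ) :
    1 - poissonTail (u * m) m ≤ (u * exp (1 - u)) ^ m := by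
  have hu0 : 0 < u := one_pos.trans_le hu
  exact le_mul_exp_one_sub_pow_of_mul_inv_pow_le hu0 <|
    one_sub_poissonTail_mul_pow_le (mul_nonneg hu0.le m.cast_nonneg) (inv_nonneg.2 hu0.le)
      (inv_le_one_of_one_le₀ hu) m

lemma mul_exp_one_sub_le (hv : 0 ≤ v) (h : 0 ≤ (v - 1) * (u - v)) :
    u * exp (1 - u) ≤ v * exp (1 - v) := by
  have hle : u ≤ v * exp (u - v) := by
    nlinarith [mul_le_mul_of_nonneg_left (add_one_le_exp (u - v)) hv]
  calc u * exp (1 - u) ≤ v * exp (u - v) * exp (1 - u) := by gcongr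
    _ = v * exp (1 - v) := by rw [mul_assoc, ← exp_add]; ring_nf

lemma mul_exp_one_sub_lt_one (hv : v ≠ 1) : v * exp (1 - v) < 1 := by
  have hlt := add_one_lt_exp (sub_ne_zero.2 hv)
  calc v * exp (1 - v) < exp (v - 1) * exp (1 - v) := by gcongr; linarith
    _ = 1 := by rw [← exp_add]; simp

lemma poissonTail_mul_le_mul_pow {m r : ℕ} (hu : 0 ≤ u) (huv : u ≤ v) (hv : v ≤ 1) (hrm : r ≤ m) :
    poissonTail (u * m) m ≤ (v * exp (1 - v)) ^ (m - r) * exp 1 ^ r * u ^ r := by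
  have hv0 : 0 ≤ v := hu.trans huv
  have hmono : u * exp (1 - u) ≤ v * exp (1 - v) :=
    mul_exp_one_sub_le hv0 (mul_nonneg_of_nonpos_of_nonpos (sub_nonpos.2 hv) (sub_nonpos.2 huv))
  have hlinear : u * exp (1 - u) ≤ exp 1 * u := by
    rw [mul_comm]
    gcongr
    exact sub_le_self 1 hu
  calc poissonTail (u * m) m
      ≤ (u * exp (1 - u)) ^ m := poissonTail_mul_le_pow hu (huv.trans hv) m
    _ = (u * exp (1 - u)) ^ (m - r) * (u * exp (1 - u)) ^ r := by
        rw [← pow_add, Nat.sub_add_cancel hrm]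
    _ ≤ (v * exp (1 - v)) ^ (m - r) * (exp 1 * u) ^ r := by gcongr
    _ = (v * exp (1 - v)) ^ (m - r) * exp 1 ^ r * u ^ r := by rw [mul_pow (exp 1), mul_assoc]

theorem tendstoUnitStep_poissonTail :
    TendstoUnitStep (fun (m : ℕ) u => poissonTail (u * m) m) atTop where
  nonneg m u hu := poissonTail_nonneg (mul_nonneg hu m.cast_nonneg) m
  le_one m u hu := poissonTail_le_one (mul_nonneg hu m.cast_nonneg) m
  eventually_ge c hc ε hε := by
    have hc0 : 0 < c := one_pos.trans hc
    have hlim := tendsto_pow_atTop_nhds_zero_of_lt_one (mul_pos hc0 (exp_pos (1 - c))).le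
      (mul_exp_one_sub_lt_one (ne_of_gt hc))
    filter_upwards [hlim.eventually_le_const hε] with m hm u hu
    have hu0 : 0 ≤ u := hc0.le.trans hu
    rw [sub_le_comm]
    calc 1 - poissonTail (u * m) m
        ≤ (u * exp (1 - u)) ^ m := one_sub_poissonTail_mul_le_pow (hc.le.trans hu) m
      _ ≤ (c * exp (1 - c)) ^ m := by
          gcongr ?_ ^ m
          exact mul_exp_one_sub_le hc0.le (mul_nonneg (sub_pos.2 hc).le (sub_nonneg.2 hu))
      _ ≤ ε := hm
  eventually_le c hc r ε hε := by
    have hlim := ((tendsto_pow_atTop_nhds_zero_of_lt_one (mul_pos hc.1 (exp_pos (1 - c))).le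
      (mul_exp_one_sub_lt_one hc.2.ne)).comp (tendsto_sub_atTop_nat r)).mul_const (exp 1 ^ r)
    rw [zero_mul] at hlim
    filter_upwards [hlim.eventually_le_const hε, eventually_ge_atTop r] with m hm hrm u hu
    exact (poissonTail_mul_le_mul_pow hu.1 hu.2 hc.2.le hrm).trans
      (mul_le_mul_of_nonneg_right hm (pow_nonneg hu.1 r))

end PoissonTail

theorem stmt_14_general {ι : Type*} (p : ι → ℝ) (hp : ∀ k, 0 ≤ p k) (α : ℝ) (ℓ : ℝ → ℝ)
    (hℓsv : ∀ c : ℝ, 0 < c → Tendsto (fun t => ℓ (c * t) / ℓ t) atTop (𝓝 1))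
    (hρ : Tendsto (fun x => (Nat.card {k : ι | x ≤ p k} : ℝ) / (x ^ (-α) * ℓ (1 / x)))
      (𝓝[>] 0) (𝓝 1))
    (q : ℝ → ℕ)
    (hqtop : Tendsto (fun t => (q t : ℝ)) atTop atTop)
    (hqsmall : Tendsto (fun t => (q t : ℝ) / t) atTop (𝓝 0)) :
    Tendsto (fun t =>
      (∑' k : ι, ∑' j : ℕ,
          Real.exp (-(p k * t)) * (p k * t) ^ (j + q t) / Nat.factorial (j + q t)) /
        ((t / q t) ^ α * ℓ (t / q t))) atTop (𝓝 1) := by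
  have hpos : ∀ᶠ t in atTop, 0 < (q t : ℝ) ∧ 0 < t :=
    (hqtop.eventually_gt_atTop 0).and (eventually_gt_atTop 0)
  have hx : Tendsto (fun t => (q t : ℝ) / t) atTop (𝓝[>] 0) :=
    tendsto_nhdsWithin_iff.2 ⟨hqsmall, hpos.mono fun t ht => div_pos ht.1 ht.2⟩
  have hreg : RegularlyVaryingAtZero (countGE p) (-α) :=
    (regularlyVaryingAtZero_rpow_mul_of_slowlyVarying hℓsv (-α)).of_tendsto_div hρ
  have hstep := tendstoUnitStep_poissonTail.comp (tendsto_natCast_atTop_iff.1 hqtop)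
  have hlim := (hstep.tendsto_tsum_div_countGE hp hreg hx).mul (hρ.comp hx)
  rw [one_mul] at hlim
  refine hlim.congr' ?_
  filter_upwards [hpos, hx.eventually hreg.eventually_ne_zero] with t ⟨hq, ht⟩ hne
  have hmean (k : ι) : p k / (q t / t) * q t = p k * t := by field_simp
  have hrpow : ((q t : ℝ) / t) ^ (-α) = (t / q t) ^ α := by
    rw [rpow_neg_eq_inv_rpow, inv_div]
  simp only [Function.comp_apply, hmean, one_div_div, hrpow]
  exact div_mul_div_cancel₀ hne

/-- Expected number of boxes with at least `q(t)` balls in the Poissonized Karlin scheme: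
if `ρ*(x) = #{k : p_k ≥ x} ∼ x^(-α) ℓ(1/x)` as `x ↓ 0` and `q` is of class `𝒬`, then
`∑_k P{Poi(p_k t) ≥ q(t)} ∼ (t/q(t))^α ℓ(t/q(t))` as `t → ∞`. -/
theorem stmt_14
    (p : ℕ → ℝ) (hp : ∀ k, 0 < p k) (hpsum : Summable p) (hp1 : ∑' k, p k = 1)
    (α : ℝ) (hα : α ∈ Set.Ioc (0:ℝ) 1)
    (ℓ : ℝ → ℝ) (hℓpos : ∀ x : ℝ, 0 < x → 0 < ℓ x)
    (hℓsv : ∀ c : ℝ, 0 < c → Tendsto (fun t => ℓ (c * t) / ℓ t) atTop (nhds 1))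
    (hρ : Tendsto (fun x => (Nat.card {k : ℕ | x ≤ p k} : ℝ) / (x ^ (-α) * ℓ (1 / x)))
      (nhdsWithin 0 (Set.Ioi 0)) (nhds 1))
    (q : ℝ → ℕ)
    (hqtop : Tendsto (fun t => (q t : ℝ)) atTop atTop)
    (hqsmall : Tendsto (fun t => (q t : ℝ) / t) atTop (nhds 0)) :
    Tendsto (fun t =>
      (∑' k : ℕ, ∑' j : ℕ,
          Real.exp (-(p k * t)) * (p k * t) ^ (j + q t) / Nat.factorial (j + q t)) /
        ((t / q t) ^ α * ℓ (t / q t))) atTop (nhds 1) :=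
  stmt_14_general p (fun k => (hp k).le) α ℓ hℓsv hρ q hqtop hqsmall
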